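/- Consider the parametric multiset function F(S; (A, b)) = M₂(Σ_{x∈S} σ(Ax + b)) on finite multisets over ℝ^d, where A is a real matrix, b a real vector, σ : ℝ → ℝ is applied entrywise, and M₂ is a monotonically increasing vector-to-vector function. (i) If σ is nonnegative, then for every parameter choice (A, b) the function S ↦ F(S; (A, b)) is monotone: S ⊆ T implies F(S; (A,b)) ≤ F(T; (A,b)). (ii) If in addition σ is monotone (nondecreasing or nonincreasing), then there exist finite multisets S, T over ℝ^d with S ⊄ T such that F(S; (A, b)) ≤ F(T; (A, b)) for every parameter choice (A, b); in fact one may take S = {(x+y)/2} and T = {x, y} for any two distinct points x, y ∈ ℝ^d. -/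

import Mathlib

/-- The parametric multiset function `F(S; (A,b)) = M₂(∑_{x∈S} σ(Ax + b))`,
with `σ` applied entrywise. -/
noncomputable def deepSetsF {d p q : ℕ} (σ : ℝ → ℝ) (M2 : (Fin p → ℝ) → (Fin q → ℝ))
    (A : Matrix (Fin p) (Fin d) ℝ) (b : Fin p → ℝ) (S : Multiset (Fin d → ℝ)) :
    Fin q → ℝ :=
  M2 ((S.map (fun x => fun i => σ (A.mulVec x i + b i))).sum)

/-!
Adding points to a multiset adds nonnegative vectors to `∑ σ(Ax + b)`, which gives monotonicity.
A monotone or antitone `σ` is quasiconvex, so the sublevel set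
`{t | σ t ≤ σ u + σ v}` is convex and, since `σ ≥ 0`, contains `u` and `v`, hence the whole segment
between them. Since `x ↦ Ax + b` maps segments to segments, any point strictly between `x` and `y`
has features dominated by the sum of those of `x` and `y`, for all `(A, b)` at once.
-/

theorem monotone_sum_map_of_nonneg {ι M : Type*} [AddCommMonoid M] [PartialOrder M]
    [IsOrderedAddMonoid M] {f : ι → M} (hf : ∀ x, 0 ≤ f x) :
    Monotone fun S : Multiset ι => (S.map f).sum := by
  intro S T hST
  obtain ⟨U, rfl⟩ := Multiset.le_iff_exists_add.mp hST
  have hU : 0 ≤ (U.map f).sum :=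
    Multiset.sum_nonneg (Multiset.forall_mem_map_iff.mpr fun x _ => hf x)
  simpa only [Multiset.map_add, Multiset.sum_add] using le_add_of_nonneg_right hU

theorem singleton_not_le_pair_of_mem_openSegment {𝕜 E : Type*} [Ring 𝕜] [LinearOrder 𝕜]
    [IsStrictOrderedRing 𝕜] [DenselyOrdered 𝕜] [AddCommGroup E] [Module 𝕜 E]
    [Module.IsTorsionFree 𝕜 E] {x y z : E} (hxy : x ≠ y) (hz : z ∈ openSegment 𝕜 x y) :
    ¬ ({z} : Multiset E) ≤ {x, y} := by
  intro hle
  have hmem : z = x ∨ z = y := by simpa using Multiset.singleton_le.mp hle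
  rcases hmem with rfl | rfl
  · exact hxy (left_mem_openSegment_iff.mp hz)
  · exact hxy (right_mem_openSegment_iff.mp hz)

theorem le_add_of_quasiconvexOn_of_mem_segment {𝕜 E β : Type*} [Semiring 𝕜] [PartialOrder 𝕜]
    [AddCommMonoid E] [SMul 𝕜 E] [AddCommMonoid β] [PartialOrder β] [IsOrderedAddMonoid β]
    {s : Set E} {f : E → β} (hf : QuasiconvexOn 𝕜 s f) {u v w : E} (hu : u ∈ s) (hv : v ∈ s)
    (hfu : 0 ≤ f u) (hfv : 0 ≤ f v) (hw : w ∈ segment 𝕜 u v) : f w ≤ f u + f v :=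
  ((hf (f u + f v)).segment_subset ⟨hu, le_add_of_nonneg_right hfv⟩
    ⟨hv, le_add_of_nonneg_left hfu⟩ hw).2

theorem mulVec_apply_add_mem_segment {𝕜 m n : Type*} [CommRing 𝕜] [PartialOrder 𝕜]
    [IsOrderedRing 𝕜] [Fintype n] (A : Matrix m n 𝕜) (b : m → 𝕜) {x y z : n → 𝕜}
    (hz : z ∈ segment 𝕜 x y) (i : m) :
    A.mulVec z i + b i ∈ segment 𝕜 (A.mulVec x i + b i) (A.mulVec y i + b i) := by
  obtain ⟨s, t, hs, ht, hst, rfl⟩ := hz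
  refine ⟨s, t, hs, ht, hst, ?_⟩
  simp only [Matrix.mulVec_add, Matrix.mulVec_smul, Pi.add_apply, Pi.smul_apply, smul_eq_mul]
  linear_combination b i * hst

theorem half_add_mem_openSegment {𝕜 ι : Type*} [Field 𝕜] [LinearOrder 𝕜] [IsStrictOrderedRing 𝕜]
    (x y : ι → 𝕜) : (x + y) / 2 ∈ openSegment 𝕜 x y := by
  have hmid : (x + y) / 2 = midpoint 𝕜 x y := by
    ext i
    simp [midpoint_eq_smul_add, div_eq_inv_mul]
  exact hmid ▸ midpoint_mem_openSegment x y

section DeepSets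

variable {d p q : ℕ} {σ : ℝ → ℝ} {M2 : (Fin p → ℝ) → (Fin q → ℝ)}

theorem monotone_deepSetsF (hM2 : Monotone M2) (hσ : ∀ t, 0 ≤ σ t)
    (A : Matrix (Fin p) (Fin d) ℝ) (b : Fin p → ℝ) : Monotone (deepSetsF σ M2 A b) :=
  hM2.comp (monotone_sum_map_of_nonneg fun _ _ => hσ _)

theorem deepSetsF_singleton_le_pair_of_mem_segment (hM2 : Monotone M2) (hσ : ∀ t, 0 ≤ σ t)
    (hqc : QuasiconvexOn ℝ Set.univ σ) (A : Matrix (Fin p) (Fin d) ℝ) (b : Fin p → ℝ)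
    {x y z : Fin d → ℝ} (hz : z ∈ segment ℝ x y) :
    deepSetsF σ M2 A b {z} ≤ deepSetsF σ M2 A b {x, y} := by
  refine hM2 fun i => ?_
  simpa using le_add_of_quasiconvexOn_of_mem_segment hqc (Set.mem_univ _) (Set.mem_univ _)
    (hσ _) (hσ _) (mulVec_apply_add_mem_segment A b hz i)

end DeepSets

theorem stmt8_general {d p q : ℕ} (σ : ℝ → ℝ) (M2 : (Fin p → ℝ) → (Fin q → ℝ))
    (hM2 : Monotone M2) (hσ : ∀ t, 0 ≤ σ t) :
    (∀ (A : Matrix (Fin p) (Fin d) ℝ) (b : Fin p → ℝ) (S T : Multiset (Fin d → ℝ)),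
      S ≤ T → deepSetsF σ M2 A b S ≤ deepSetsF σ M2 A b T) ∧
    (QuasiconvexOn ℝ Set.univ σ →
      ∀ x y : Fin d → ℝ, x ≠ y → ∀ z ∈ openSegment ℝ x y,
        ¬ (({z} : Multiset (Fin d → ℝ)) ≤ ({x, y} : Multiset (Fin d → ℝ))) ∧
        ∀ (A : Matrix (Fin p) (Fin d) ℝ) (b : Fin p → ℝ),
          deepSetsF σ M2 A b {z} ≤ deepSetsF σ M2 A b {x, y}) :=
  ⟨fun A b _ _ hST => monotone_deepSetsF hM2 hσ A b hST,
    fun hqc x y hxy _ hz => ⟨singleton_not_le_pair_of_mem_openSegment hxy hz,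
      fun A b => deepSetsF_singleton_le_pair_of_mem_segment hM2 hσ hqc A b
        (openSegment_subset_segment ℝ x y hz)⟩⟩

/-- (i) If `σ` is nonnegative and `M₂` is monotonically increasing, then for every
parameter choice `(A,b)` the function `S ↦ F(S;(A,b))` is monotone.
(ii) If in addition `σ` is monotone (nondecreasing or nonincreasing), then there
are multisets `S ⊄ T` with `F(S;(A,b)) ≤ F(T;(A,b))` for all `(A,b)`; in fact one
may take `S = {(x+y)/2}` and `T = {x,y}` for any distinct `x, y ∈ ℝ^d`. -/
theorem stmt8 {d p q : ℕ} (σ : ℝ → ℝ) (M2 : (Fin p → ℝ) → (Fin q → ℝ))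
    (hM2 : Monotone M2) (hσ : ∀ t, 0 ≤ σ t) :
    (∀ (A : Matrix (Fin p) (Fin d) ℝ) (b : Fin p → ℝ) (S T : Multiset (Fin d → ℝ)),
      S ≤ T → deepSetsF σ M2 A b S ≤ deepSetsF σ M2 A b T) ∧
    ((Monotone σ ∨ Antitone σ) →
      ∀ x y : Fin d → ℝ, x ≠ y →
        ¬ (({(x + y) / 2} : Multiset (Fin d → ℝ)) ≤ ({x, y} : Multiset (Fin d → ℝ))) ∧
        ∀ (A : Matrix (Fin p) (Fin d) ℝ) (b : Fin p → ℝ),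
          deepSetsF σ M2 A b {(x + y) / 2} ≤ deepSetsF σ M2 A b {x, y}) :=
  ⟨(stmt8_general σ M2 hM2 hσ).1, fun h x y hxy => (stmt8_general σ M2 hM2 hσ).2
    (h.elim Monotone.quasiconvexOn Antitone.quasiconvexOn) x y hxy _ (half_add_mem_openSegment x y)⟩
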